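/- arXiv:2503.00864 — 3 statements merged into one kernel-verified Lean document; each statement's English description precedes it below -/
import Mathlib

section
/- Let X be a complete metric space and x ∈ X. The partially ordered (by inclusion) family 𝓕⁰_x of factor subsets of X through x that are isometric to real Hilbert spaces has a maximal element. -/
/-- `IsL2Prod Φ` means `Φ : X → Y × Z` is a bijection identifying `X` with the
ℓ²-direct product of the metric spaces `Y` and `Z`. -/
def IsL2Prod {X Y Z : Type} [MetricSpace X] [MetricSpace Y] [MetricSpace Z]
    (Φ : X → Y × Z) : Prop :=
  Function.Bijective Φ ∧
    ∀ p q : X, dist p q ^ 2 = dist (Φ p).1 (Φ q).1 ^ 2 + dist (Φ p).2 (Φ q).2 ^ 2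

/-- `A` is a factor subset of `X` through `x`: some ℓ²-product decomposition of `X`
carries `A` onto the fiber of the first factor through `x`. -/
def IsFactorSubset {X : Type} [MetricSpace X] (A : Set X) (x : X) : Prop :=
  x ∈ A ∧ ∃ (Y Z : Type) (_ : MetricSpace Y) (_ : MetricSpace Z) (Φ : X → Y × Z),
    IsL2Prod Φ ∧ A = {p : X | (Φ p).2 = (Φ x).2}

/-- A line in a metric space: a subset isometric to `ℝ`. -/
def IsLine {X : Type} [MetricSpace X] (ℓ : Set X) : Prop :=
  ∃ γ : ℝ → X, Isometry γ ∧ Set.range γ = ℓ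

/-- A splitting line: a line carried onto a fiber `ℝ × {z₀}` by some
ℓ²-product decomposition `X ≅ ℝ × Z`. -/
def IsSplittingLine {X : Type} [MetricSpace X] (ℓ : Set X) : Prop :=
  IsLine ℓ ∧ ∃ (Z : Type) (_ : MetricSpace Z) (Φ : X → ℝ × Z) (z₀ : Z),
    IsL2Prod Φ ∧ Φ '' ℓ = Set.univ ×ˢ {z₀}

/-- `π` is the nearest-point projection onto `A`: every point has `π p` as its
unique nearest point in `A`. -/
def IsNearestPointProj {X : Type} [MetricSpace X] (A : Set X) (π : X → X) : Prop :=
  ∀ p : X, π p ∈ A ∧ (∀ a ∈ A, dist p (π p) ≤ dist p a) ∧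
    ∀ a ∈ A, dist p a = dist p (π p) → a = π p

/-- The subset `A`, with the induced metric, is isometric to a real Hilbert space. -/
def IsHilbertSubset {X : Type} [MetricSpace X] (A : Set X) : Prop :=
  ∃ (H : Type) (_ : NormedAddCommGroup H) (_ : InnerProductSpace ℝ H) (_ : CompleteSpace H)
    (f : A → H), Isometry f ∧ Function.Surjective f

/-- Band data for a Hilbert factor through `x`. -/
structure HD {X : Type} [MetricSpace X] (x : X) (A : Set X) : Type 1 where
  S : X → X → X
  S1 : ∀ p, S p p = p
  S2 : ∀ a q b r, S (S a q) (S b r) = S a r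
  S3 : ∀ a q b r, dist (S a q) (S b r) ^ 2 =
    dist (S a x) (S b x) ^ 2 + dist (S x q) (S x r) ^ 2
  memA : ∀ p, p ∈ A ↔ S x p = x
  H : Type
  nH : NormedAddCommGroup H
  iH : InnerProductSpace ℝ H
  e : H → X
  h : X → H
  e_iso : Isometry e
  e_zero : e 0 = x
  e_mem : ∀ v, e v ∈ A
  e_h : ∀ p, e (h p) = S p x

attribute [instance] HD.nH HD.iH

theorem factor_of_band {X : Type} [MetricSpace X] (x : X) (A : Set X) (S : X → X → X)
    (S1 : ∀ p, S p p = p)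
    (S2 : ∀ a q b r, S (S a q) (S b r) = S a r)
    (S3 : ∀ a q b r, dist (S a q) (S b r) ^ 2 =
      dist (S a x) (S b x) ^ 2 + dist (S x q) (S x r) ^ 2)
    (memA : ∀ p, p ∈ A ↔ S x p = x) : IsFactorSubset A x := by
  refine ⟨(memA x).2 (S1 x), Set.range (fun p => S p x), Set.range (fun p => S x p),
    inferInstance, inferInstance, fun p => (⟨S p x, p, rfl⟩, ⟨S x p, p, rfl⟩), ⟨⟨?_, ?_⟩, ?_⟩, ?_⟩
  · intro p q hpq
    have e1 : S p x = S q x := congrArg (fun z => z.1.1) hpq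
    have e2 : S x p = S x q := congrArg (fun z => z.2.1) hpq
    have := S3 p p q q
    rw [e1, e2, S1, S1] at this
    simpa using this
  · rintro ⟨⟨_, a, rfl⟩, ⟨_, b, rfl⟩⟩
    refine ⟨S a b, ?_⟩
    have h1 := S2 a b x x
    have h2 := S2 x x a b
    rw [S1] at h1 h2
    simp only [h1, h2]
  · intro p q
    have := S3 p p q q
    rw [S1, S1] at this
    exact this
  · ext p
    rw [memA, Set.mem_ofPred_eq, Subtype.ext_iff]
    simp only [S1]

theorem exists_HD {X : Type} [MetricSpace X] (x : X) (A : Set X)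
    (hf : IsFactorSubset A x) (hh : IsHilbertSubset A) : Nonempty (HD x A) := by
  obtain ⟨hx, Y, Z, _, _, Φ, ⟨hb, hd⟩, hA⟩ := hf
  obtain ⟨H, _, _, _, f, hf, hfs⟩ := hh
  let Ψ := Equiv.ofBijective Φ hb
  have hΨ : ∀ y, Φ (Ψ.symm y) = y := fun y => Equiv.ofBijective_apply_symm_apply Φ hb y
  have hΨ' : ∀ y, Ψ.symm (Φ y) = y := fun y => Equiv.ofBijective_symm_apply_apply Φ hb y
  let F := Equiv.ofBijective f ⟨hf.injective, hfs⟩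
  have hF : ∀ y, f (F.symm y) = y := fun y => Equiv.ofBijective_apply_symm_apply f _ y
  have hF' : ∀ y, F.symm (f y) = y := fun y => Equiv.ofBijective_symm_apply_apply f _ y
  let S : X → X → X := fun a q => Ψ.symm ((Φ a).1, (Φ q).2)
  have hS : ∀ a q, Φ (S a q) = ((Φ a).1, (Φ q).2) := fun a q => hΨ _
  have hmem : ∀ p, S p x ∈ A := by
    intro p; rw [hA]; simp [hS]
  refine ⟨⟨S, ?_, ?_, ?_, ?_, H, inferInstance, inferInstance,
    fun v => (F.symm (v + f ⟨x, hx⟩) : A), fun p => f ⟨S p x, hmem p⟩ - f ⟨x, hx⟩, ?_, ?_, ?_, ?_⟩⟩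
  · intro p; exact hΨ' p
  · intro a q b r; apply hb.1; simp [hS]
  · intro a q b r; simp [hd, hS]
  · intro p
    rw [hA, ← hb.1.eq_iff, hS, Prod.ext_iff]; simp
  · refine Isometry.of_dist_eq fun v w => ?_
    rw [← Subtype.dist_eq, ← hf.dist_eq, hF, hF]; simp
  · simp [hF']
  · intro v; exact Subtype.coe_prop _
  · intro p; simp [hF']

namespace HD
variable {X : Type} [MetricSpace X] {x : X} {A B : Set X}

theorem S_fst (D : HD x A) (a q r : X) : D.S (D.S a q) r = D.S a r := by
  have := D.S2 a q r r; rwa [D.S1] at this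

theorem S_snd (D : HD x A) (a q r : X) : D.S a (D.S q r) = D.S a r := by
  have := D.S2 a a q r; rwa [D.S1] at this

theorem S_mem (D : HD x A) {p : X} (hp : p ∈ A) : D.S p x = p := by
  have := D.S_snd p x p
  rw [(D.memA p).1 hp, D.S1] at this; exact this

theorem e_h_mem (D : HD x A) {p : X} (hp : p ∈ A) : D.e (D.h p) = p := by
  rw [D.e_h, D.S_mem hp]

theorem h_e (D : HD x A) (v : D.H) : D.h (D.e v) = v :=
  D.e_iso.injective (D.e_h_mem (D.e_mem v))

theorem h_S (D : HD x A) (a q : X) : D.h (D.S a q) = D.h a :=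
  D.e_iso.injective (by rw [D.e_h, D.e_h, D.S_fst])

theorem S3' (D : HD x A) (a q b r : X) : dist (D.S a q) (D.S b r) ^ 2 =
    ‖D.h a - D.h b‖ ^ 2 + dist (D.S x q) (D.S x r) ^ 2 := by
  rw [D.S3, ← D.e_h, ← D.e_h, D.e_iso.dist_eq, dist_eq_norm]

theorem dsq (D : HD x A) (p q : X) : dist p q ^ 2 =
    ‖D.h p - D.h q‖ ^ 2 + dist (D.S x p) (D.S x q) ^ 2 := by
  have := D.S3' p p q q; rwa [D.S1, D.S1] at this

theorem lip1 (D : HD x A) (a b q : X) : dist (D.S a q) (D.S b q) ≤ dist a b := by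
  have h1 := D.S3' a q b q
  have h2 := D.dsq a b
  rw [dist_self] at h1
  refine abs_le_of_sq_le_sq' ?_ dist_nonneg |>.2
  nlinarith [sq_nonneg (dist (D.S x a) (D.S x b))]

theorem lip2 (D : HD x A) (a q r : X) : dist (D.S a q) (D.S a r) ≤ dist q r := by
  have h1 := D.S3' a q a r
  have h2 := D.dsq q r
  rw [sub_self, norm_zero] at h1
  refine abs_le_of_sq_le_sq' ?_ dist_nonneg |>.2
  nlinarith [sq_nonneg ‖D.h q - D.h r‖]

theorem lip (D : HD x A) (a q b r : X) :
    dist (D.S a q) (D.S b r) ≤ dist a b + dist q r :=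
  (dist_triangle _ (D.S b q) _).trans (add_le_add (D.lip1 _ _ _) (D.lip2 _ _ _))

theorem h_x (D : HD x A) : D.h x = 0 := by
  have := D.h_e 0; rwa [D.e_zero] at this

/-- the transition map -/
theorem exists_L (D : HD x A) (E : HD x B) (hAB : A ⊆ B) :
    ∃ L : D.H →ₗᵢ[ℝ] E.H, ∀ v, E.e (L v) = D.e v := by
  have hi : Isometry (fun v => E.h (D.e v)) := by
    refine Isometry.of_dist_eq fun v w => ?_
    rw [← E.e_iso.dist_eq, E.e_h_mem (hAB (D.e_mem v)), E.e_h_mem (hAB (D.e_mem w)),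
      D.e_iso.dist_eq]
  refine ⟨hi.affineIsometryOfStrictConvexSpace.linearIsometry, fun v => ?_⟩
  have := hi.affineIsometryOfStrictConvexSpace.map_vadd 0 v
  simp only [Isometry.affineIsometryOfStrictConvexSpace_apply, vadd_eq_add, add_zero,
    D.e_zero, E.h_x] at this
  rw [← this, E.e_h_mem (hAB (D.e_mem v))]

theorem h_L (D : HD x A) (E : HD x B) (L : D.H →ₗᵢ[ℝ] E.H)
    (hL : ∀ v, E.e (L v) = D.e v) {u : X} (hu : u ∈ A) : E.h u = L (D.h u) := by
  rw [← E.h_e (L (D.h u)), hL, D.e_h_mem hu]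

theorem orth (D : HD x A) (E : HD x B) (L : D.H →ₗᵢ[ℝ] E.H)
    (hL : ∀ v, E.e (L v) = D.e v) (p : X) :
    (∀ u, inner ℝ (E.h p - L (D.h p)) (L u) = 0) ∧
    ‖E.h p - L (D.h p)‖ ^ 2 = dist (D.S x p) x ^ 2 - dist (E.S x p) x ^ 2 := by
  have key : ∀ u, ‖(E.h p - L (D.h p)) + L u‖ ^ 2 - ‖u‖ ^ 2 =
      dist (D.S x p) x ^ 2 - dist (E.S x p) x ^ 2 := by
    intro u
    have h1 := D.dsq p (D.e (D.h p - u))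
    have h2 := E.dsq p (D.e (D.h p - u))
    rw [(D.memA _).1 (D.e_mem _), D.h_e] at h1
    rw [← hL, (E.memA _).1 (E.e_mem _), E.h_e, hL, L.map_sub] at h2
    rw [sub_sub_cancel] at h1
    rw [← sub_add] at h2
    linarith
  have h0 := key 0
  simp only [map_zero, add_zero, norm_zero] at h0
  refine ⟨fun u => ?_, by linarith⟩
  have := key u
  rw [norm_add_sq_real, L.norm_map] at this
  linarith

theorem comp1 (D : HD x A) (E : HD x B) (hAB : A ⊆ B) (p : X) :
    dist (D.S p x) (E.S p x) ^ 2 = dist (D.S x p) x ^ 2 - dist (E.S x p) x ^ 2 := by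
  obtain ⟨L, hL⟩ := D.exists_L E hAB
  rw [← (D.orth E L hL p).2, ← D.e_h, ← hL, ← E.e_h, E.e_iso.dist_eq, dist_comm, dist_eq_norm]

theorem comp2 (D : HD x A) (E : HD x B) (hAB : A ⊆ B) (a q : X) :
    dist (D.S a q) (E.S a q) ≤ dist (D.S a x) (E.S a x) + dist (D.S q x) (E.S q x) := by
  obtain ⟨L, hL⟩ := D.exists_L E hAB
  have hw : ∀ p, dist (D.S p x) (E.S p x) = ‖E.h p - L (D.h p)‖ := by
    intro p
    rw [← D.e_h, ← hL, ← E.e_h, E.e_iso.dist_eq, dist_comm, dist_eq_norm]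
  rw [hw, hw]
  set p := D.S a q with hp
  have hhp : D.h p = D.h a := D.h_S a q
  have h1 : dist p q ^ 2 = ‖D.h a - D.h q‖ ^ 2 := by
    have := D.S3' a q q q
    rw [D.S1, dist_self] at this
    rw [this]; ring
  have h2 := E.dsq p q
  have o1 := (D.orth E L hL p).1 (D.h a - D.h q)
  have o2 := (D.orth E L hL q).1 (D.h a - D.h q)
  have h3 : E.h p - E.h q = ((E.h p - L (D.h p)) - (E.h q - L (D.h q))) + L (D.h a - D.h q) := by
    rw [hhp, map_sub]; abel
  rw [h3, norm_add_sq_real, inner_sub_left, o1, o2, L.norm_map] at h2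
  have n1 := sq_nonneg ‖(E.h p - L (D.h p)) - (E.h q - L (D.h q))‖
  have n2 := sq_nonneg (dist (E.S x p) (E.S x q))
  have z1 : ‖(E.h p - L (D.h p)) - (E.h q - L (D.h q))‖ = 0 := by
    apply pow_eq_zero_iff (two_ne_zero) |>.1; linarith
  have z2 : dist (E.S x p) (E.S x q) = 0 := by
    apply pow_eq_zero_iff (two_ne_zero) |>.1; linarith
  have z1' := sub_eq_zero.1 (norm_eq_zero.1 z1)
  have h4 := E.S3' p p a q
  rw [E.S1, z2] at h4
  have h5 : dist p (E.S a q) = ‖E.h p - E.h a‖ := by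
    apply (sq_eq_sq₀ dist_nonneg (norm_nonneg _)).1; rw [h4]; ring
  have h6 : E.h p - E.h a = (E.h q - L (D.h q)) - (E.h a - L (D.h a)) := by
    rw [← z1', hhp]; abel
  rw [h5, h6, add_comm]
  exact norm_sub_le _ _

end HD

open Filter Topology

section Limit
variable {X : Type} [MetricSpace X] [CompleteSpace X] {x : X} {c : Set (Set X)}

theorem limit_exists (D : ∀ i : c, HD x i.1) (hc : IsChain (· ⊆ ·) c) [Nonempty c]
    (a q : X) [(atTop : Filter c).NeBot] :
    ∃ y, Tendsto (fun i => (D i).S a q) atTop (𝓝 y) := by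
  classical
  have tot : ∀ i j : c, i ≤ j ∨ j ≤ i := fun i j => hc.total i.2 j.2
  have hF : ∀ p, ∃ l, Tendsto (fun i => dist ((D i).S x p) x ^ 2) atTop (𝓝 l) := by
    intro p
    refine ⟨_, tendsto_atTop_ciInf ?_ ⟨0, ?_⟩⟩
    · intro i j hij
      have := (D i).comp1 (D j) hij p
      have h2 := sq_nonneg (dist ((D i).S p x) ((D j).S p x))
      simp only
      linarith
    · rintro _ ⟨i, rfl⟩; positivity
  have hP : ∀ p, Tendsto (fun ij : c × c => dist ((D ij.1).S p x) ((D ij.2).S p x))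
      (atTop ×ˢ atTop) (𝓝 0) := by
    intro p
    obtain ⟨l, hl⟩ := hF p
    have h1 : Tendsto (fun ij : c × c => Real.sqrt |dist ((D ij.1).S x p) x ^ 2 -
        dist ((D ij.2).S x p) x ^ 2|) (atTop ×ˢ atTop) (𝓝 0) := by
      have := ((hl.comp tendsto_fst).sub (hl.comp (tendsto_snd (f := (atTop : Filter c))))).abs.sqrt
      simpa using this
    refine h1.congr fun ij => ?_
    rw [← Real.sqrt_sq (dist_nonneg (x := (D ij.1).S p x))]
    congr 1
    rcases tot ij.1 ij.2 with hij | hij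
    · rw [← (D ij.1).comp1 (D ij.2) hij p, abs_of_nonneg (by positivity)]
    · rw [abs_sub_comm, ← (D ij.2).comp1 (D ij.1) hij p, abs_of_nonneg (by positivity), dist_comm]
  have hC : Cauchy (map (fun i => (D i).S a q) atTop) := by
    rw [cauchy_map_iff', Metric.uniformity_eq_comap_nhds_zero, tendsto_comap_iff]
    have := (hP a).add (hP q)
    rw [add_zero] at this
    refine squeeze_zero (fun _ => dist_nonneg) (fun ij => ?_) this
    rcases tot ij.1 ij.2 with hij | hij
    · exact (D ij.1).comp2 (D ij.2) hij a q
    · have := (D ij.2).comp2 (D ij.1) hij a q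
      simp only [Function.comp]
      rw [dist_comm, dist_comm ((D ij.1).S a x), dist_comm ((D ij.1).S q x)]
      exact this
  exact CompleteSpace.complete hC

theorem factor_limit (D : ∀ i : c, HD x i.1) (hc : IsChain (· ⊆ ·) c) (hne : c.Nonempty) :
    IsFactorSubset (closure (⋃₀ c)) x := by
  have : Nonempty c := hne.to_subtype
  have : IsDirectedOrder c := ⟨fun i j => by
    rcases hc.total i.2 j.2 with h | h
    · exact ⟨j, h, le_refl _⟩
    · exact ⟨i, le_refl _, h⟩⟩
  have : (atTop : Filter c).NeBot := atTop_neBot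
  choose S hS using fun a q => limit_exists D hc a q
  have S1 : ∀ p, S p p = p := fun p =>
    tendsto_nhds_unique (hS p p) (by simp only [(D _).S1]; exact tendsto_const_nhds)
  have S2 : ∀ a q b r, S (S a q) (S b r) = S a r := by
    intro a q b r
    refine tendsto_nhds_unique (hS _ _) ?_
    refine (tendsto_iff_of_dist ?_).1 (hS a r)
    have h1 := (tendsto_iff_dist_tendsto_zero.1 (hS a q)).add
      (tendsto_iff_dist_tendsto_zero.1 (hS b r))
    rw [add_zero] at h1
    refine squeeze_zero (fun _ => dist_nonneg) (fun i => ?_) h1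
    rw [← (D i).S2 a q b r]
    exact (D i).lip _ _ _ _
  have S3 : ∀ a q b r, dist (S a q) (S b r) ^ 2 =
      dist (S a x) (S b x) ^ 2 + dist (S x q) (S x r) ^ 2 := by
    intro a q b r
    refine tendsto_nhds_unique (((hS a q).dist (hS b r)).pow 2) ?_
    refine ((((hS a x).dist (hS b x)).pow 2).add (((hS x q).dist (hS x r)).pow 2)).congr ?_
    intro i
    exact ((D i).S3 a q b r).symm
  refine factor_of_band x _ S S1 S2 S3 fun p => ⟨fun hp => ?_, fun hp => ?_⟩
  · have hcl : IsClosed {p | S x p = x} := by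
      refine isClosed_eq ?_ continuous_const
      refine (LipschitzWith.of_dist_le_mul (K := 1) fun q r => ?_).continuous
      rw [NNReal.coe_one, one_mul]
      exact le_of_tendsto ((hS x q).dist (hS x r)) (Eventually.of_forall fun i => (D i).lip2 _ _ _)
    refine closure_minimal ?_ hcl hp
    rintro u ⟨A, hA, hu⟩
    refine tendsto_nhds_unique (hS x u) ?_
    refine tendsto_const_nhds.congr' ?_
    filter_upwards [eventually_ge_atTop (⟨A, hA⟩ : c)] with i hi
    exact (((D i).memA u).1 (hi hu)).symm
  · have h1 : S p x = p := by
      have := S2 p p x p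
      rwa [S1, hp] at this
    have h2 := hS p x
    rw [h1] at h2
    refine mem_closure_of_tendsto h2 (Eventually.of_forall fun i => ?_)
    refine ⟨i.1, i.2, ?_⟩
    rw [(D i).memA, (D i).S_snd, (D i).S1]

theorem hilbert_limit (D : ∀ i : c, HD x i.1) (hc : IsChain (· ⊆ ·) c) (hne : c.Nonempty) :
    IsHilbertSubset (closure (⋃₀ c)) := by
  classical
  have : Nonempty c := hne.to_subtype
  have tot : ∀ i j : c, i ≤ j ∨ j ≤ i := fun i j => hc.total i.2 j.2
  let U := ↥(⋃₀ c)
  let V := U →₀ ℝ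
  let Λ : ∀ i : c, V →ₗ[ℝ] (D i).H := fun i => Finsupp.linearCombination ℝ (fun u : U => (D i).h u.1)
  have hΛ : ∀ (i : c) (f : V), Λ i f = ∑ u ∈ f.support, f u • (D i).h u.1 := fun i f =>
    Finsupp.linearCombination_apply ℝ f
  -- any finite set lies in a member
  have hfin : ∀ s : Finset U, ∃ i : c, ∀ u ∈ s, u.1 ∈ i.1 := by
    intro s
    induction s using Finset.induction_on with
    | empty => exact ⟨Classical.arbitrary c, by simp⟩
    | insert u s _ ih =>
      obtain ⟨i, hi⟩ := ih
      obtain ⟨A, hA, hu⟩ := u.2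
      rcases tot i ⟨A, hA⟩ with h | h
      · refine ⟨⟨A, hA⟩, fun w hw => ?_⟩
        rcases Finset.mem_insert.1 hw with rfl | hw
        · exact hu
        · exact h (hi w hw)
      · refine ⟨i, fun w hw => ?_⟩
        rcases Finset.mem_insert.1 hw with rfl | hw
        · exact h hu
        · exact hi w hw
  have indep0 : ∀ i j : c, i ≤ j → ∀ f : V, (∀ u ∈ f.support, u.1 ∈ i.1) →
      (D i).e (Λ i f) = (D j).e (Λ j f) := by
    intro i j hij f hi
    obtain ⟨L, hL⟩ := (D i).exists_L (D j) hij
    rw [← hL]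
    congr 1
    rw [hΛ, hΛ, map_sum]
    refine Finset.sum_congr rfl fun u hu => ?_
    rw [LinearIsometry.map_smul, (D i).h_L (D j) L hL (hi u hu)]
  choose I hI using hfin
  let g : V → X := fun f => (D (I f.support)).e (Λ (I f.support) f)
  have hg : ∀ (i : c) (f : V), (∀ u ∈ f.support, u.1 ∈ i.1) → g f = (D i).e (Λ i f) := by
    intro i f hi
    rcases tot (I f.support) i with h | h
    · exact indep0 _ _ h f (hI _)
    · exact (indep0 _ _ h f hi).symm
  -- simultaneous index
  have hsim : ∀ f₁ f₂ f₃ : V, ∃ i : c, g f₁ = (D i).e (Λ i f₁) ∧ g f₂ = (D i).e (Λ i f₂) ∧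
      g f₃ = (D i).e (Λ i f₃) ∧ g (f₁ + f₂) = (D i).e (Λ i (f₁ + f₂)) ∧
      g (f₁ - f₂) = (D i).e (Λ i (f₁ - f₂)) ∧
      ∀ r : ℝ, g (r • f₁) = (D i).e (Λ i (r • f₁)) := by
    intro f₁ f₂ f₃
    have hh := hI (f₁.support ∪ f₂.support ∪ f₃.support)
    refine ⟨I (f₁.support ∪ f₂.support ∪ f₃.support), hg _ _ ?_, hg _ _ ?_, hg _ _ ?_, hg _ _ ?_,
      hg _ _ ?_, fun r => hg _ _ ?_⟩
    · intro u hu; exact hh u (by simp only [Finset.mem_union]; tauto)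
    · intro u hu; exact hh u (by simp only [Finset.mem_union]; tauto)
    · intro u hu; exact hh u (by simp only [Finset.mem_union]; tauto)
    · intro u hu
      have := Finset.mem_union.1 (Finsupp.support_add hu)
      exact hh u (by simp only [Finset.mem_union]; tauto)
    · intro u hu
      have := Finset.mem_union.1 (Finsupp.support_sub hu)
      exact hh u (by simp only [Finset.mem_union]; tauto)
    · intro u hu
      have := Finsupp.support_smul hu
      exact hh u (by simp only [Finset.mem_union]; tauto)
  let k : X → X → ℝ := fun p q => (dist p x ^ 2 + dist q x ^ 2 - dist p q ^ 2) / 2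
  have hk : ∀ (i : c) (v w : (D i).H), k ((D i).e v) ((D i).e w) = inner ℝ v w := by
    intro i v w
    have h1 : dist ((D i).e v) x = ‖v‖ := by
      have := (D i).e_iso.dist_eq v 0
      rwa [(D i).e_zero, dist_zero_right] at this
    have h2 : dist ((D i).e w) x = ‖w‖ := by
      have := (D i).e_iso.dist_eq w 0
      rwa [(D i).e_zero, dist_zero_right] at this
    simp only [k]
    rw [h1, h2, (D i).e_iso.dist_eq, dist_eq_norm, norm_sub_sq_real]
    ring
  let core : PreInnerProductSpace.Core ℝ V :=
    { inner := fun f f' => k (g f) (g f')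
      conj_inner_symm := fun f f' => by
        simp only [k, dist_comm (g f') (g f), conj_trivial]; ring
      re_inner_nonneg := fun f => by
        simp only [k, dist_self, RCLike.re_to_real]
        nlinarith [sq_nonneg (dist (g f) x)]
      add_left := fun f₁ f₂ f₃ => by
        obtain ⟨i, h1, h2, h3, h4, -, -⟩ := hsim f₁ f₂ f₃
        simp only [h1, h2, h3, h4, hk, map_add, inner_add_left]
      smul_left := fun f₁ f₂ r => by
        obtain ⟨i, h1, h2, -, -, -, h3⟩ := hsim f₁ f₂ f₂
        simp only [h1, h2, h3, hk, map_smul, real_inner_smul_left, conj_trivial] }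
  let : SeminormedAddCommGroup V := 
    @InnerProductSpace.Core.toSeminormedAddCommGroup ℝ V _ _ _ core
  let : InnerProductSpace ℝ V := InnerProductSpace.ofCore core
  have hinner : ∀ f f' : V, inner ℝ f f' = k (g f) (g f') := fun _ _ => rfl
  have giso : Isometry g := by
    refine Isometry.of_dist_eq fun f f' => ?_
    rw [dist_eq_norm, ← sq_eq_sq₀ dist_nonneg (norm_nonneg _), ← real_inner_self_eq_norm_sq, hinner]
    obtain ⟨i, h1, h2, -, -, h3, -⟩ := hsim f f' f'
    rw [h3, hk, h1, h2, (D i).e_iso.dist_eq, dist_eq_norm, real_inner_self_eq_norm_sq, map_sub]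
  have hgU : ∀ f, g f ∈ ⋃₀ c := fun f => ⟨_, (I f.support).2, (D (I f.support)).e_mem _⟩
  have hUg : ∀ u ∈ ⋃₀ c, ∃ f, g f = u := by
    intro u hu
    obtain ⟨A, hA, huA⟩ := hu
    refine ⟨Finsupp.single (⟨u, A, hA, huA⟩ : U) 1, ?_⟩
    rw [hg ⟨A, hA⟩]
    · have h1 : Λ ⟨A, hA⟩ (Finsupp.single (⟨u, A, hA, huA⟩ : U) 1) = (D ⟨A, hA⟩).h u :=
        (Finsupp.linearCombination_single ℝ (1 : ℝ) (⟨u, A, hA, huA⟩ : U)).trans (one_smul _ _)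
      rw [h1]
      exact (D ⟨A, hA⟩).e_h_mem huA
    · intro w hw
      have := Finsupp.support_single_subset hw
      rw [Finset.mem_singleton.1 this]
      exact huA
  let G : UniformSpace.Completion V → X := UniformSpace.Completion.extension g
  have Giso : Isometry G := giso.completion_extension
  have Gcoe : ∀ f : V, G f = g f := fun f =>
    UniformSpace.Completion.extension_coe giso.uniformContinuous f
  have Gcl : IsClosed (Set.range G) := Giso.isClosedEmbedding.isClosed_range
  have hrange : Set.range G = closure (⋃₀ c) := by
    apply Set.Subset.antisymm
    · rintro _ ⟨v, rfl⟩
      induction v using UniformSpace.Completion.induction_on with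
      | hp => exact isClosed_closure.preimage Giso.continuous
      | ih f => rw [Gcoe]; exact subset_closure (hgU f)
    · refine closure_minimal (fun u hu => ?_) Gcl
      obtain ⟨f, rfl⟩ := hUg u hu
      exact ⟨f, Gcoe f⟩
  have hinv : ∀ p : closure (⋃₀ c), ∃ v, G v = p.1 := fun p => by
    exact hrange.symm.subset p.2
  choose F hF using hinv
  refine ⟨UniformSpace.Completion V, inferInstance, inferInstance, inferInstance, F, ?_, ?_⟩
  · refine Isometry.of_dist_eq fun p q => ?_
    rw [← Giso.dist_eq, hF, hF, Subtype.dist_eq]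
  · intro v
    have hv : G v ∈ closure (⋃₀ c) := by rw [← hrange]; exact ⟨v, rfl⟩
    exact ⟨⟨G v, hv⟩, Giso.injective (hF _)⟩

end Limit

theorem factor_point {X : Type} [MetricSpace X] (x : X) : IsFactorSubset {x} x :=
  factor_of_band x _ (fun _ q => q) (fun _ => rfl) (fun _ _ _ _ => rfl) (by simp) (by simp)

theorem hilbert_point {X : Type} [MetricSpace X] (x : X) : IsHilbertSubset ({x} : Set X) := by
  refine ⟨EuclideanSpace ℝ (Fin 0), inferInstance, inferInstance, inferInstance, fun _ => 0, ?_, ?_⟩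
  · exact Isometry.of_dist_eq fun p q => by rw [Subsingleton.elim p q]; simp
  · intro v; exact ⟨⟨x, rfl⟩, Subsingleton.elim _ _⟩

/-- the family `𝓕⁰ₓ` of factor subsets through `x` isometric to real
Hilbert spaces has a maximal element. -/
theorem exists_maximal_hilbert_factor {X : Type} [MetricSpace X] [CompleteSpace X]
    (x : X) :
    ∃ A : Set X, (IsFactorSubset A x ∧ IsHilbertSubset A) ∧
      ∀ B : Set X, IsFactorSubset B x → IsHilbertSubset B → A ⊆ B → B = A := by
  obtain ⟨m, -, hm⟩ := zorn_subset_nonempty {A : Set X | IsFactorSubset A x ∧ IsHilbertSubset A}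
    (by
      intro c hcS hc hne
      have D : ∀ i : c, HD x i.1 := fun i =>
        (exists_HD x i.1 (hcS i.2).1 (hcS i.2).2).some
      exact ⟨closure (⋃₀ c), ⟨factor_limit D hc hne, hilbert_limit D hc hne⟩, fun s hs =>
        (Set.subset_sUnion_of_mem hs).trans subset_closure⟩)
    {x} ⟨factor_point x, hilbert_point x⟩
  exact ⟨m, hm.prop, fun B h1 h2 hB => (hm.eq_of_subset ⟨h1, h2⟩ hB).symm⟩
end

section
/- (Main theorem) Every complete metric space X decomposes as an ℓ²-direct product X ≅ Y × H where H is a real Hilbert space (possibly finite- or zero-dimensional) and Y contains no splitting lines; moreover this decomposition is unique up to isometry of the factors. -/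
section HilbertFactor

/-- `T` is a flow translating in the direction of the affine function `f`, squared speed `n`. -/
def IsTransl {X : Type} [MetricSpace X] (T : ℝ → X → X) (f : X → ℝ) (n : ℝ) : Prop :=
  ∀ s x y, dist (T s x) y ^ 2 = dist x y ^ 2 + 2 * s * (f x - f y) + s ^ 2 * n

namespace IsTransl

variable {X : Type} [MetricSpace X] {T S : ℝ → X → X} {f g : X → ℝ} {n m : ℝ}

lemma dist_self (h : IsTransl T f n) (s : ℝ) (x : X) : dist (T s x) x ^ 2 = s ^ 2 * n := by
  have := h s x x
  simpa using this

lemma nonneg (h : IsTransl T f n) (x : X) : 0 ≤ n := by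
  have := h.dist_self 1 x
  nlinarith [sq_nonneg (dist (T 1 x) x)]

lemma apply (h : IsTransl T f n) (s : ℝ) (x : X) : f (T s x) = f x + s * n := by
  rcases eq_or_ne s 0 with rfl | hs
  · have h0 : T 0 x = x := by
      have := h.dist_self 0 x
      simpa using this
    simp [h0]
  · have h1 := h s x (T s x)
    have h2 := h.dist_self s x
    rw [dist_comm] at h2
    rw [h2] at h1
    simp only [_root_.dist_self] at h1
    have : s * (f (T s x)) = s * (f x + s * n) := by linarith
    exact mul_left_cancel₀ hs this

lemma flow (h : IsTransl T f n) (s t : ℝ) (x : X) : T s (T t x) = T (s + t) x := by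
  have e : dist (T s (T t x)) (T (s + t) x) ^ 2 = 0 := by
    rw [h, h, h.apply, h.apply, dist_comm, h.dist_self]; ring
  simpa using e

lemma zero (h : IsTransl T f n) (x : X) : T 0 x = x := by
  have := h.dist_self 0 x
  simpa using this

lemma cross (h : IsTransl T f n) (k : IsTransl S g m) (s t : ℝ) (x y : X) :
    s * (f (S t y) - f y) = t * (g (T s x) - g x) := by
  have h1 := h s x (S t y)
  have h2 := k t y (T s x)
  have h3 := h s x y
  have h4 := k t y x
  rw [dist_comm] at h2 h4
  rw [dist_comm y] at h2
  rw [h3] at h2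
  rw [h4] at h1
  rw [dist_comm y x] at h1
  linarith

lemma add (h : IsTransl T f n) (k : IsTransl S g m) (x₀ : X) :
    IsTransl (fun s x => T s (S s x)) (fun x => f x + g x)
      (n + m + 2 * (g (T 1 x₀) - g x₀)) := by
  intro s x y
  have := h.cross k 1 s x₀ x
  rw [h, k]
  have e : f (S s x) = f x + s * (g (T 1 x₀) - g x₀) := by linarith
  rw [e]; ring

lemma smul (h : IsTransl T f n) (c : ℝ) :
    IsTransl (fun s x => T (c * s) x) (fun x => c * f x) (c ^ 2 * n) := by
  intro s x y
  rw [h]; ring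

lemma sub_const (h : IsTransl T f n) (c : ℝ) : IsTransl T (fun x => f x - c) n := by
  intro s x y
  rw [h]; ring

lemma zero' : IsTransl (fun _ x => x) (fun _ : X => (0 : ℝ)) 0 := by
  intro s x y; simp

lemma unique (h : IsTransl T f n) (k : IsTransl S f m) (x : X) (s : ℝ) : T s x = S s x := by
  have key : ∀ s, dist (T s x) (S s x) ^ 2 = s ^ 2 * (n - m) := by
    intro s
    rw [h, k.apply, dist_comm, k.dist_self]; ring
  have key' : ∀ s, dist (S s x) (T s x) ^ 2 = s ^ 2 * (m - n) := by
    intro s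
    rw [k, h.apply, dist_comm, h.dist_self]; ring
  have h1 := key s
  have h2 := key' s
  rw [dist_comm] at h2
  have : dist (T s x) (S s x) ^ 2 = 0 := by linarith
  simpa using this

lemma lip (h : IsTransl T f n) (x y : X) : (f x - f y) ^ 2 ≤ n * dist x y ^ 2 := by
  have hn := h.nonneg x
  have key : ∀ s : ℝ, 0 ≤ n * (s * s) + 2 * (f x - f y) * s + dist x y ^ 2 := by
    intro s
    have := h s x y
    nlinarith [sq_nonneg (dist (T s x) y)]
  have := discrim_le_zero key
  unfold discrim at this
  linarith

/-- A nontrivial translation flow produces a splitting line. -/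
lemma exists_splitting (h : IsTransl T f n) (x : X) (hn : n ≠ 0) :
    ∃ l : Set X, IsSplittingLine l := by
  have hpos : 0 < n := lt_of_le_of_ne (h.nonneg x) hn.symm
  obtain ⟨T', f', h'⟩ : ∃ (T' : ℝ → X → X) (f' : X → ℝ), IsTransl T' f' 1 := by
    have := h.smul (1 / √n)
    rw [div_pow, Real.sq_sqrt hpos.le, one_pow, one_div_mul_cancel hn] at this
    exact ⟨_, _, this⟩
  have hf0 : ∀ y, f' (T' (-f' y) y) = 0 := by
    intro y; rw [h'.apply]; ring
  let Φ : X → ℝ × {z : X // f' z = 0} := fun y => (f' y, ⟨T' (-f' y) y, hf0 y⟩)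
  let z₀ : {z : X // f' z = 0} := ⟨T' (-f' x) x, hf0 x⟩
  have hΦ : ∀ (t : ℝ) (z : {z : X // f' z = 0}), Φ (T' t z) = (t, z) := by
    intro t z
    have e : f' (T' t z) = t := by rw [h'.apply, z.2]; ring
    refine Prod.ext e (Subtype.ext ?_)
    show T' (-f' (T' t z)) (T' t z) = z
    rw [e, h'.flow, neg_add_cancel, h'.zero]
  have hd : ∀ s t x y, dist (T' s x) (T' t y) ^ 2 =
      dist x y ^ 2 + 2 * (s - t) * (f' x - f' y) + (s - t) ^ 2 := by
    intro s t x y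
    rw [h', h'.apply, dist_comm, h', dist_comm]; ring
  have hiso : Isometry (fun t => T' t (z₀ : X)) := by
    refine Isometry.of_dist_eq fun s t => ?_
    have := hd s t z₀ z₀
    rw [Real.dist_eq, ← sq_eq_sq₀ dist_nonneg (abs_nonneg _), sq_abs, this]
    simp
  refine ⟨Set.range (fun t => T' t (z₀ : X)), ⟨_, hiso, rfl⟩, {z : X // f' z = 0},
    inferInstance, Φ, z₀, ⟨⟨?_, ?_⟩, ?_⟩, ?_⟩
  · intro a b hab
    have h1 : f' a = f' b := congrArg Prod.fst hab
    have h2 : T' (-f' a) a = T' (-f' b) b := congrArg (fun q => (q.2 : X)) hab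
    have h3 := congrArg (T' (f' a)) h2
    rw [← h1, h'.flow, h'.flow, add_neg_cancel, h'.zero, h'.zero] at h3
    exact h3
  · rintro ⟨t, z⟩
    exact ⟨_, hΦ t z⟩
  · intro p q
    show dist p q ^ 2 = dist (f' p) (f' q) ^ 2 + dist (T' (-f' p) p) (T' (-f' q) q) ^ 2
    rw [hd, Real.dist_eq, sq_abs]; ring
  · ext ⟨t, z⟩
    constructor
    · rintro ⟨_, ⟨s, rfl⟩, hs⟩
      simp only [hΦ] at hs
      have := congrArg Prod.snd hs
      exact ⟨trivial, this.symm⟩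
    · rintro ⟨-, hz⟩
      have hz' : z = z₀ := hz
      exact ⟨_, ⟨t, rfl⟩, by rw [hz']; exact hΦ t z₀⟩

end IsTransl

lemma IsSplittingLine.exists_transl {Y : Type} [MetricSpace Y] {l : Set Y}
    (h : IsSplittingLine l) : ∃ (T : ℝ → Y → Y) (f : Y → ℝ), IsTransl T f 1 := by
  obtain ⟨-, Z, _, Φ, -, ⟨hb, hd⟩, -⟩ := h
  let e := Equiv.ofBijective Φ hb
  have he : ∀ q, Φ (e.symm q) = q := fun q => e.apply_symm_apply q
  refine ⟨fun s p => e.symm ((Φ p).1 + s, (Φ p).2), fun p => (Φ p).1, ?_⟩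
  intro s x y
  rw [hd, hd x y, he, Real.dist_eq, Real.dist_eq, sq_abs, sq_abs]
  ring

lemma IsL2Prod.pull {X Y Z : Type} [MetricSpace X] [MetricSpace Y] [MetricSpace Z]
    {Φ : X → Y × Z} (h : IsL2Prod Φ) {T : ℝ → Y → Y} {f : Y → ℝ} {n : ℝ}
    (hT : IsTransl T f n) : ∃ T' : ℝ → X → X, IsTransl T' (fun x => f (Φ x).1) n := by
  obtain ⟨hb, hd⟩ := h
  let e := Equiv.ofBijective Φ hb
  have he : ∀ q, Φ (e.symm q) = q := fun q => e.apply_symm_apply q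
  refine ⟨fun s p => e.symm (T s (Φ p).1, (Φ p).2), ?_⟩
  intro s x y
  rw [hd, hd x y, he, hT]
  ring

variable {X : Type} [MetricSpace X]

/-- The vector space of affine functions generating translation flows, vanishing at `x₀`. -/
def translSub (x₀ : X) : Submodule ℝ (X → ℝ) where
  carrier := {f | f x₀ = 0 ∧ ∃ T n, IsTransl T f n}
  add_mem' := by
    rintro f g ⟨hf, T, n, hT⟩ ⟨hg, S, m, hS⟩
    exact ⟨by simp [hf, hg], _, _, hT.add hS x₀⟩
  zero_mem' := ⟨rfl, _, _, IsTransl.zero'⟩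
  smul_mem' := by
    rintro c f ⟨hf, T, n, hT⟩
    exact ⟨by simp [hf], _, _, hT.smul c⟩

/-- Type synonym without topology. -/
def TV (x₀ : X) : Type := translSub x₀

instance (x₀ : X) : AddCommGroup (TV x₀) := inferInstanceAs (AddCommGroup (translSub x₀))
instance (x₀ : X) : Module ℝ (TV x₀) := inferInstanceAs (Module ℝ (translSub x₀))

namespace TV

variable {x₀ : X}

/-- underlying function -/
def fn (v : TV x₀) : X → ℝ := v.1

lemma ext' {v w : TV x₀} (h : ∀ x, v.fn x = w.fn x) : v = w := Subtype.ext (funext h)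

/-- constructor -/
def mk' (f : X → ℝ) (T : ℝ → X → X) (n : ℝ) (h : IsTransl T f n) : TV x₀ :=
  ⟨fun x => f x - f x₀, by simp, T, n, h.sub_const _⟩

@[simp] lemma fn_mk' (f : X → ℝ) (T : ℝ → X → X) (n : ℝ) (h : IsTransl T f n) (x : X) :
    (mk' f T n h : TV x₀).fn x = f x - f x₀ := rfl

@[simp] lemma fn_add (v w : TV x₀) (x : X) : (v + w).fn x = v.fn x + w.fn x := rfl
@[simp] lemma fn_smul (c : ℝ) (v : TV x₀) (x : X) : (c • v).fn x = c * v.fn x := rfl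
@[simp] lemma fn_zero (x : X) : (0 : TV x₀).fn x = 0 := rfl
@[simp] lemma fn_neg (v : TV x₀) (x : X) : (-v).fn x = - v.fn x := rfl
@[simp] lemma fn_sub (v w : TV x₀) (x : X) : (v - w).fn x = v.fn x - w.fn x := rfl
@[simp] lemma fn_base (v : TV x₀) : v.fn x₀ = 0 := v.2.1

/-- the flow -/
noncomputable def fl (v : TV x₀) : ℝ → X → X := v.2.2.choose
/-- squared speed -/
noncomputable def sp (v : TV x₀) : ℝ := v.2.2.choose_spec.choose
lemma isTransl (v : TV x₀) : IsTransl v.fl v.fn v.sp := v.2.2.choose_spec.choose_spec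

/-- time one translation -/
noncomputable def tr (v : TV x₀) : X → X := v.fl 1

lemma fl_eq (v : TV x₀) (s : ℝ) (x : X) : v.fl s x = (s • v).tr x := by
  have h := (v.isTransl.smul s).unique (s • v).isTransl x 1
  simpa [tr] using h

noncomputable instance core (x₀ : X) : InnerProductSpace.Core ℝ (TV x₀) where
  inner v w := v.fn (w.tr x₀)
  conj_inner_symm v w := by
    have := v.isTransl.cross w.isTransl 1 1 x₀ x₀
    simp at this
    simp [tr, this]
  re_inner_nonneg v := by
    have := v.isTransl.apply 1 x₀
    simp at this
    simpa [tr, this] using v.isTransl.nonneg x₀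
  add_left u v w := rfl
  smul_left v w r := rfl
  definite v h := by
    have := v.isTransl.apply 1 x₀
    simp at this
    have h0 : v.sp = 0 := by rw [← this]; exact h
    apply ext'
    intro x
    have := v.isTransl.lip x x₀
    rw [h0] at this
    simp at this
    simpa using this

noncomputable instance (x₀ : X) : NormedAddCommGroup (TV x₀) :=
  (core x₀).toNormedAddCommGroup
noncomputable instance (x₀ : X) : InnerProductSpace ℝ (TV x₀) :=
  InnerProductSpace.ofCore (core x₀).toCore

lemma inner_def (v w : TV x₀) : inner ℝ v w = v.fn (w.tr x₀) := rfl

lemma sp_eq (v : TV x₀) : v.sp = ‖v‖ ^ 2 := by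
  rw [← real_inner_self_eq_norm_sq, inner_def]
  have := v.isTransl.apply 1 x₀
  simp at this
  exact this.symm

lemma fn_tr (v w : TV x₀) (x : X) : v.fn (w.tr x) = v.fn x + inner ℝ v w := by
  have h1 := v.isTransl.cross w.isTransl 1 1 x₀ x
  have h2 := v.isTransl.cross w.isTransl 1 1 x₀ x₀
  rw [inner_def]
  simp only [tr]
  have := v.fn_base
  linarith

lemma dist_tr (v : TV x₀) (x y : X) :
    dist (v.tr x) y ^ 2 = dist x y ^ 2 + 2 * (v.fn x - v.fn y) + ‖v‖ ^ 2 := by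
  have := v.isTransl 1 x y
  rw [sp_eq] at this
  simp only [tr]
  linarith

lemma dist_tr_self (v : TV x₀) (x : X) : dist (v.tr x) x ^ 2 = ‖v‖ ^ 2 := by
  rw [dist_tr]; simp

lemma dist_tr_tr (v w : TV x₀) (x y : X) : dist (v.tr x) (w.tr y) ^ 2 =
    dist x y ^ 2 + 2 * ((v - w).fn x - (v - w).fn y) + ‖v - w‖ ^ 2 := by
  rw [dist_tr, dist_comm, dist_tr, fn_tr, norm_sub_sq_real, dist_comm y x]
  simp only [fn_sub]
  ring

lemma tr_zero (x : X) : (0 : TV x₀).tr x = x := by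
  have := (0 : TV x₀).dist_tr_self x
  simpa using this

lemma tr_tr (v w : TV x₀) (x : X) : v.tr (w.tr x) = (v + w).tr x := by
  have e : dist (v.tr (w.tr x)) ((v + w).tr x) ^ 2 = 0 := by
    rw [dist_tr, dist_tr_tr, fn_tr, fn_tr]
    simp [inner_add_right]
    ring
  simpa using e

lemma tr_mk' (f : X → ℝ) (T : ℝ → X → X) (n : ℝ) (h : IsTransl T f n) (x : X) :
    (mk' f T n h : TV x₀).tr x = T 1 x :=
  (mk' f T n h : TV x₀).isTransl.unique (h.sub_const (f x₀)) x 1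

lemma abs_fn_sub_le (v : TV x₀) (x y : X) : |v.fn x - v.fn y| ≤ ‖v‖ * dist x y := by
  have := v.isTransl.lip x y
  rw [sp_eq, ← mul_pow] at this
  exact abs_le_of_sq_le_sq this (by positivity)

lemma abs_fn_le (v : TV x₀) (x : X) : |v.fn x| ≤ ‖v‖ * dist x x₀ := by
  simpa using v.abs_fn_sub_le x x₀

lemma dist_tr_tr_self (v w : TV x₀) (x : X) : dist (v.tr x) (w.tr x) = dist v w := by
  have := dist_tr_tr v w x x
  rw [dist_eq_norm, ← sq_eq_sq₀ dist_nonneg (norm_nonneg _), this]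
  simp

open Filter Topology in
instance complete [CompleteSpace X] (x₀ : X) : CompleteSpace (TV x₀) := by
  refine Metric.complete_of_cauchySeq_tendsto fun u hu => ?_
  have h1 : ∀ (s : ℝ) (x : X), ∃ a, Tendsto (fun k => (s • u k).tr x) atTop (𝓝 a) := by
    intro s x
    refine cauchySeq_tendsto_of_complete ?_
    have hs : CauchySeq (fun k => s • u k) :=
      hu.map (uniformContinuous_const_smul s)
    rw [Metric.cauchySeq_iff] at hs ⊢
    simpa only [dist_tr_tr_self] using hs
  have h2 : ∀ x, ∃ a, Tendsto (fun k => (u k).fn x) atTop (𝓝 a) := by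
    intro x
    refine cauchySeq_tendsto_of_complete ?_
    rw [Metric.cauchySeq_iff] at hu ⊢
    intro ε hε
    obtain ⟨N, hN⟩ := hu (ε / (dist x x₀ + 1)) (by positivity)
    refine ⟨N, fun m hm k hk => ?_⟩
    have e := (u m - u k).abs_fn_le x
    have hd := hN m hm k hk
    rw [dist_eq_norm] at hd
    rw [Real.dist_eq, ← fn_sub]
    rw [lt_div_iff₀ (by positivity)] at hd
    have := norm_nonneg (u m - u k)
    nlinarith
  obtain ⟨n, hn⟩ : ∃ a, Tendsto (fun k => ‖u k‖) atTop (𝓝 a) :=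
    cauchySeq_tendsto_of_complete (hu.map uniformContinuous_norm)
  choose T hT using h1
  choose f hf using h2
  have hfT : IsTransl T f (n ^ 2) := by
    intro s x y
    refine tendsto_nhds_unique (((hT s x).dist tendsto_const_nhds).pow 2)
      (Tendsto.congr (fun k => ?_) ((tendsto_const_nhds.add
        (((hf x).sub (hf y)).const_mul (2 * s))).add ((hn.pow 2).const_mul (s ^ 2))))
    rw [dist_tr, norm_smul, mul_pow, Real.norm_eq_abs, sq_abs]
    simp only [fn_smul]
    ring
  refine ⟨mk' f T _ hfT, ?_⟩
  rw [tendsto_iff_dist_tendsto_zero]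
  have h3 := tendsto_iff_dist_tendsto_zero.1 (hT 1 x₀)
  refine h3.congr fun k => ?_
  rw [one_smul, ← tr_mk' (x₀ := x₀) f T _ hfT, dist_tr_tr_self]

end TV

open TV

section Uniq

variable {Y H : Type} [MetricSpace Y] [NormedAddCommGroup H] [InnerProductSpace ℝ H]
  {Φ : X → Y × H}

/-- Inverse of the decomposition. -/
noncomputable def pinv (hΦ : IsL2Prod Φ) (q : Y × H) : X := (hΦ.1.2 q).choose

lemma Φ_pinv (hΦ : IsL2Prod Φ) (q : Y × H) : Φ (pinv hΦ q) = q := (hΦ.1.2 q).choose_spec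

lemma pinv_Φ (hΦ : IsL2Prod Φ) (p : X) : pinv hΦ (Φ p) = p := hΦ.1.1 (Φ_pinv hΦ _)

lemma isTransl_hilbert (hΦ : IsL2Prod Φ) (a : H) :
    IsTransl (fun s p => pinv hΦ ((Φ p).1, (Φ p).2 + s • a)) (fun p => inner ℝ a (Φ p).2)
      (‖a‖ ^ 2) := by
  intro s x y
  rw [hΦ.2, hΦ.2 x y, Φ_pinv hΦ, dist_eq_norm, dist_eq_norm]
  have : (Φ x).2 + s • a - (Φ y).2 = ((Φ x).2 - (Φ y).2) + s • a := by abel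
  simp only [this]
  rw [norm_add_sq_real, inner_smul_right, real_inner_comm, inner_sub_right, norm_smul, mul_pow,
    Real.norm_eq_abs, sq_abs]
  ring

/-- Embedding of the Hilbert factor. -/
noncomputable def jv (hΦ : IsL2Prod Φ) (x₀ : X) (a : H) : TV x₀ :=
  TV.mk' _ _ _ (isTransl_hilbert hΦ a)

lemma jv_fn (hΦ : IsL2Prod Φ) (x₀ : X) (a : H) (x : X) :
    (jv hΦ x₀ a).fn x = inner ℝ a (Φ x).2 - inner ℝ a (Φ x₀).2 := rfl

lemma jv_tr (hΦ : IsL2Prod Φ) (x₀ : X) (a : H) (x : X) :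
    (jv hΦ x₀ a).tr x = pinv hΦ ((Φ x).1, (Φ x).2 + a) := by
  rw [jv, TV.tr_mk', one_smul]

lemma jv_inner (hΦ : IsL2Prod Φ) (x₀ : X) (a b : H) :
    inner ℝ (jv hΦ x₀ a) (jv hΦ x₀ b) = inner ℝ a b := by
  rw [TV.inner_def, jv_tr, jv_fn, Φ_pinv hΦ, inner_add_right]; ring

lemma jv_norm (hΦ : IsL2Prod Φ) (x₀ : X) (a : H) : ‖jv hΦ x₀ a‖ = ‖a‖ := by
  rw [← sq_eq_sq₀ (norm_nonneg _) (norm_nonneg _), ← real_inner_self_eq_norm_sq,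
    ← real_inner_self_eq_norm_sq, jv_inner]

lemma jv_surj [CompleteSpace H] (hΦ : IsL2Prod Φ) (hY : ∀ l : Set Y, ¬ IsSplittingLine l)
    (x₀ : X) (v : TV x₀) : ∃ a : H, jv hΦ x₀ a = v := by
  let L : H →ₗ[ℝ] ℝ :=
    { toFun := fun a => inner ℝ v (jv hΦ x₀ a)
      map_add' := fun a b => by
        rw [← inner_add_right]
        congr 1
        apply TV.ext'
        intro x
        simp only [jv_fn, TV.fn_add, inner_add_left]
        ring
      map_smul' := fun c a => by
        rw [RingHom.id_apply, smul_eq_mul, ← inner_smul_right]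
        congr 1
        apply TV.ext'
        intro x
        simp only [jv_fn, TV.fn_smul, real_inner_smul_left]
        ring }
  let L' : H →L[ℝ] ℝ := L.mkContinuous ‖v‖ fun a => by
    rw [← jv_norm hΦ x₀ a]
    exact norm_inner_le_norm (𝕜 := ℝ) v (jv hΦ x₀ a)
  obtain ⟨a, ha⟩ := (InnerProductSpace.toDual ℝ H).surjective L'
  have hL : ∀ b, inner ℝ a b = inner ℝ v (jv hΦ x₀ b) := by
    intro b
    have := congrArg (fun F => F b) ha
    simp only [InnerProductSpace.toDual_apply_apply] at this
    exact this
  refine ⟨a, ?_⟩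
  by_contra hne
  set w : TV x₀ := v - jv hΦ x₀ a with hw
  have hwne : w ≠ 0 := fun h => hne (sub_eq_zero.1 h).symm
  have horth : ∀ b, inner ℝ w (jv hΦ x₀ b) = 0 := by
    intro b
    rw [hw, inner_sub_left, jv_inner, hL, sub_self]
  have hcoord : ∀ (s : ℝ) (x : X), (Φ ((s • w).tr x)).2 = (Φ x).2 := by
    intro s x
    refine ext_inner_left ℝ fun b => ?_
    have := TV.fn_tr (jv hΦ x₀ b) (s • w) x
    rw [inner_smul_right, real_inner_comm, horth, jv_fn, jv_fn] at this
    linarith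
  have hT : IsTransl (fun s y => (Φ ((s • w).tr (pinv hΦ (y, 0)))).1)
      (fun y => w.fn (pinv hΦ (y, 0))) (‖w‖ ^ 2) := by
    intro s y z
    have h1 := hΦ.2 ((s • w).tr (pinv hΦ (y, 0))) (pinv hΦ (z, 0))
    have h2 := hΦ.2 (pinv hΦ (y, 0)) (pinv hΦ (z, 0))
    rw [TV.dist_tr, hcoord, h2] at h1
    simp only [Φ_pinv hΦ, TV.fn_smul, norm_smul, mul_pow, Real.norm_eq_abs, sq_abs, dist_self] at h1
    simp only
    linarith
  obtain ⟨l, hl⟩ := hT.exists_splitting (Φ x₀).1 (by simpa using hwne)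
  exact hY l hl

lemma snd_eq_iff [CompleteSpace H] (hΦ : IsL2Prod Φ) (hY : ∀ l : Set Y, ¬ IsSplittingLine l)
    (x₀ p q : X) : (Φ p).2 = (Φ q).2 ↔ ∀ v : TV x₀, v.fn p = v.fn q := by
  constructor
  · intro h v
    obtain ⟨a, rfl⟩ := jv_surj hΦ hY x₀ v
    rw [jv_fn, jv_fn, h]
  · intro h
    refine ext_inner_left ℝ fun b => ?_
    have := h (jv hΦ x₀ b)
    rw [jv_fn, jv_fn] at this
    linarith

lemma fst_eq_iff [CompleteSpace H] (hΦ : IsL2Prod Φ) (hY : ∀ l : Set Y, ¬ IsSplittingLine l)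
    (x₀ p q : X) : (Φ p).1 = (Φ q).1 ↔ ∃ v : TV x₀, v.tr p = q := by
  constructor
  · intro h
    refine ⟨jv hΦ x₀ ((Φ q).2 - (Φ p).2), ?_⟩
    rw [jv_tr, h, add_sub_cancel]
    exact pinv_Φ hΦ q
  · rintro ⟨v, rfl⟩
    obtain ⟨a, rfl⟩ := jv_surj hΦ hY x₀ v
    rw [jv_tr, Φ_pinv hΦ]

end Uniq

/-- Two decompositions with the same fibers are compatible. -/
lemma exists_compat {Y H Y' H' : Type} [MetricSpace Y] [MetricSpace H] [MetricSpace Y']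
    [MetricSpace H'] {Φ : X → Y × H} {Φ' : X → Y' × H'} (x₀ : X) (h : IsL2Prod Φ)
    (h' : IsL2Prod Φ')
    (h1 : ∀ p q, (Φ p).1 = (Φ q).1 ↔ (Φ' p).1 = (Φ' q).1)
    (h2 : ∀ p q, (Φ p).2 = (Φ q).2 ↔ (Φ' p).2 = (Φ' q).2) :
    ∃ (g : Y ≃ᵢ Y') (k : H ≃ᵢ H'), ∀ p : X, Φ' p = (g (Φ p).1, k (Φ p).2) := by
  choose e he using h.1.2
  choose e' he' using h'.1.2
  let g : Y → Y' := fun y => (Φ' (e (y, (Φ x₀).2))).1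
  let k : H → H' := fun y => (Φ' (e ((Φ x₀).1, y))).2
  have hg : ∀ p, g (Φ p).1 = (Φ' p).1 := fun p => (h1 _ _).1 (by rw [he])
  have hk : ∀ p, k (Φ p).2 = (Φ' p).2 := fun p => (h2 _ _).1 (by rw [he])
  have gi : Isometry g := by
    refine Isometry.of_dist_eq fun a b => ?_
    have a1 := h.2 (e (a, (Φ x₀).2)) (e (b, (Φ x₀).2))
    have a2 := h'.2 (e (a, (Φ x₀).2)) (e (b, (Φ x₀).2))
    rw [(h2 (e (a, (Φ x₀).2)) (e (b, (Φ x₀).2))).1 (by rw [he, he]), a1] at a2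
    simp only [he, dist_self] at a2
    rw [← sq_eq_sq₀ dist_nonneg dist_nonneg]
    simp only [g]
    linarith
  have ki : Isometry k := by
    refine Isometry.of_dist_eq fun a b => ?_
    have a1 := h.2 (e ((Φ x₀).1, a)) (e ((Φ x₀).1, b))
    have a2 := h'.2 (e ((Φ x₀).1, a)) (e ((Φ x₀).1, b))
    rw [(h1 (e ((Φ x₀).1, a)) (e ((Φ x₀).1, b))).1 (by rw [he, he]), a1] at a2
    simp only [he, dist_self] at a2
    rw [← sq_eq_sq₀ dist_nonneg dist_nonneg]
    simp only [k]
    linarith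
  have gs : Function.Surjective g := fun y =>
    ⟨(Φ (e' (y, (Φ' x₀).2))).1, by rw [hg, he']⟩
  have ks : Function.Surjective k := fun y =>
    ⟨(Φ (e' ((Φ' x₀).1, y))).2, by rw [hk, he']⟩
  refine ⟨⟨Equiv.ofBijective g ⟨gi.injective, gs⟩, gi⟩,
    ⟨Equiv.ofBijective k ⟨ki.injective, ks⟩, ki⟩, fun p => ?_⟩
  exact Prod.ext (hg p).symm (hk p).symm

/-- Existence of the decomposition. -/
lemma exists_decomp [CompleteSpace X] (x₀ : X) :
    ∃ Φ : X → {x : X // ∀ v : TV x₀, v.fn x = 0} × TV x₀,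
      IsL2Prod Φ ∧ ∀ l : Set {x : X // ∀ v : TV x₀, v.fn x = 0}, ¬ IsSplittingLine l := by
  have hr : ∀ x, ∃ r : TV x₀, ∀ v : TV x₀, v.fn x = inner ℝ v r := by
    intro x
    let L : TV x₀ →ₗ[ℝ] ℝ :=
      { toFun := fun v => v.fn x
        map_add' := fun _ _ => rfl
        map_smul' := fun _ _ => rfl }
    let L' : TV x₀ →L[ℝ] ℝ := L.mkContinuous (dist x x₀) fun v => by
      rw [mul_comm]; exact v.abs_fn_le x
    obtain ⟨r, hr⟩ := (InnerProductSpace.toDual ℝ (TV x₀)).surjective L'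
    refine ⟨r, fun v => ?_⟩
    have := congrArg (fun F => F v) hr
    rw [real_inner_comm]
    simp only [InnerProductSpace.toDual_apply_apply] at this
    exact this.symm
  choose r hr using hr
  have hY : ∀ x (v : TV x₀), v.fn ((-r x).tr x) = 0 := by
    intro x v
    rw [TV.fn_tr, hr, inner_neg_right, add_neg_cancel]
  have hrt : ∀ (v : TV x₀) (y : X), (∀ w : TV x₀, w.fn y = 0) → r (v.tr y) = v := by
    intro v y hy
    refine ext_inner_left ℝ fun w => ?_
    rw [← hr, TV.fn_tr, hy, zero_add]
  let Φ : X → {x : X // ∀ v : TV x₀, v.fn x = 0} × TV x₀ :=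
    fun x => (⟨(-r x).tr x, hY x⟩, r x)
  have hΦ : IsL2Prod Φ := by
    refine ⟨⟨?_, ?_⟩, ?_⟩
    · intro a b hab
      have h2 : r a = r b := congrArg Prod.snd hab
      have h1 : (-r a).tr a = (-r b).tr b := congrArg (fun q => (q.1 : X)) hab
      have h3 := congrArg (r a).tr h1
      rw [← h2, TV.tr_tr, TV.tr_tr, add_neg_cancel, TV.tr_zero, TV.tr_zero] at h3
      exact h3
    · rintro ⟨⟨y, hy⟩, v⟩
      refine ⟨v.tr y, Prod.ext (Subtype.ext ?_) (hrt v y hy)⟩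
      show (-r (v.tr y)).tr (v.tr y) = y
      rw [hrt v y hy, TV.tr_tr, neg_add_cancel, TV.tr_zero]
    · intro p q
      show dist p q ^ 2 = dist ((-r p).tr p) ((-r q).tr q) ^ 2 + dist (r p) (r q) ^ 2
      have hp : (r p).tr ((-r p).tr p) = p := by
        rw [TV.tr_tr, add_neg_cancel, TV.tr_zero]
      have hq : (r q).tr ((-r q).tr q) = q := by
        rw [TV.tr_tr, add_neg_cancel, TV.tr_zero]
      have := TV.dist_tr_tr (r p) (r q) ((-r p).tr p) ((-r q).tr q)
      rw [hp, hq, hY, hY] at this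
      rw [this, dist_eq_norm]
      ring
  refine ⟨Φ, hΦ, fun l hl => ?_⟩
  obtain ⟨T, f, hT⟩ := hl.exists_transl
  obtain ⟨T', hT'⟩ := hΦ.pull hT
  let w : TV x₀ := TV.mk' _ _ _ hT'
  let y := (Φ x₀).1
  obtain ⟨p, hp⟩ := hΦ.1.2 (y, 0)
  obtain ⟨q, hq⟩ := hΦ.1.2 (T 1 y, 0)
  have hrp : r p = 0 := congrArg Prod.snd hp
  have hrq : r q = 0 := congrArg Prod.snd hq
  have e1 := hr p w
  have e2 := hr q w
  rw [hrp, inner_zero_right] at e1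
  rw [hrq, inner_zero_right] at e2
  simp only [w, TV.fn_mk', hp] at e1
  simp only [w, TV.fn_mk', hq] at e2
  have := hT.apply 1 y
  linarith

end HilbertFactor

/-- Main theorem: every (nonempty) complete metric space splits as an
ℓ²-product `Y × H` with `H` a real Hilbert space and `Y` without splitting lines,
uniquely up to isometries of the factors compatible with the decompositions. -/
theorem hilbert_factor_decomposition {X : Type} [MetricSpace X] [CompleteSpace X]
    [Nonempty X] :
    ∃ (Y H : Type) (_ : MetricSpace Y) (_ : NormedAddCommGroup H)
      (_ : InnerProductSpace ℝ H) (_ : CompleteSpace H) (Φ : X → Y × H),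
      IsL2Prod Φ ∧ (∀ ℓ : Set Y, ¬ IsSplittingLine ℓ) ∧
      ∀ (Y' H' : Type) (_ : MetricSpace Y') (_ : NormedAddCommGroup H')
        (_ : InnerProductSpace ℝ H') (_ : CompleteSpace H') (Φ' : X → Y' × H'),
        IsL2Prod Φ' → (∀ ℓ : Set Y', ¬ IsSplittingLine ℓ) →
        ∃ (g : Y ≃ᵢ Y') (h : H ≃ᵢ H'),
          ∀ p : X, Φ' p = (g (Φ p).1, h (Φ p).2) := by
  obtain ⟨x₀⟩ := ‹Nonempty X›
  obtain ⟨Φ, hΦ, hY⟩ := exists_decomp x₀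
  refine ⟨_, _, inferInstance, inferInstance, inferInstance, inferInstance, Φ, hΦ, hY, ?_⟩
  intro Y' H' _ _ _ _ Φ' hΦ' hY'
  exact exists_compat x₀ hΦ hΦ'
    (fun p q => (fst_eq_iff hΦ hY x₀ p q).trans (fst_eq_iff hΦ' hY' x₀ p q).symm)
    (fun p q => (snd_eq_iff hΦ hY x₀ p q).trans (snd_eq_iff hΦ' hY' x₀ p q).symm)
end

section
/- Let X be a complete metric space with decomposition X = Y × H where H is a Hilbert space and Y has no splitting lines. Then the isometry group of X is canonically isomorphic to Iso(Y) × Iso(H): every isometry of X preserves the product structure, i.e., has the form (g, h) with g ∈ Iso(Y), h ∈ Iso(H). -/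
/-- A flow with the right distance formula produces a splitting line. -/
theorem split_of_flow {Y : Type} [MetricSpace Y] (B : ℝ → Y → Y) (ρ : Y → ℝ) (y₀ : Y)
    (hB0 : ∀ y, B 0 y = y) (hBadd : ∀ s t y, B (s + t) y = B s (B t y))
    (hρ : ∀ t y, ρ (B t y) = ρ y + t)
    (hd : ∀ s t y y', dist (B s y) (B t y') ^ 2
      = dist y y' ^ 2 + 2 * (s - t) * (ρ y - ρ y') + (s - t) ^ 2) :
    ∃ ℓ : Set Y, IsSplittingLine ℓ := by
  refine ⟨Set.range (fun t => B t y₀), ⟨fun t => B t y₀, ?_, rfl⟩, {z : Y // ρ z = 0},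
    inferInstance, fun y => (ρ y, ⟨B (-ρ y) y, by rw [hρ]; ring⟩),
    ⟨B (-ρ y₀) y₀, by rw [hρ]; ring⟩, ⟨⟨?_, ?_⟩, ?_⟩, ?_⟩
  · refine Isometry.of_dist_eq fun s t => ?_
    have h := hd s t y₀ y₀
    simp only [dist_self, sub_self] at h
    rw [Real.dist_eq, ← abs_of_nonneg (dist_nonneg (x := B s y₀) (y := B t y₀))]
    apply (sq_eq_sq_iff_abs_eq_abs _ _).1
    linarith
  · intro y y' h
    simp only [Prod.mk.injEq, Subtype.mk.injEq] at h
    obtain ⟨h1, h2⟩ := h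
    have := congrArg (B (ρ y)) h2
    rw [← hBadd, ← h1, ← hBadd] at this
    simpa [hB0] using this
  · rintro ⟨t, z, hz⟩
    refine ⟨B t z, ?_⟩
    have h1 : ρ (B t z) = t := by rw [hρ, hz]; ring
    simp only [Prod.mk.injEq, Subtype.mk.injEq]
    refine ⟨h1, ?_⟩
    rw [h1, ← hBadd]
    simp [hB0]
  · intro p q
    have h := hd (-ρ p) (-ρ q) p q
    simp only [Subtype.dist_eq]
    rw [h, Real.dist_eq, sq_abs]
    ring
  · ext ⟨t, z, hz⟩
    simp only [Set.mem_image, Set.mem_range, exists_exists_eq_and, Prod.mk.injEq,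
      Subtype.mk.injEq, Set.mem_prod, Set.mem_univ, true_and, Set.mem_singleton_iff]
    constructor
    · rintro ⟨s, h1, h2⟩
      rw [← h2, ← hBadd, hρ]
      congr 1
      ring
    · intro h
      refine ⟨t - ρ y₀, by rw [hρ]; ring, ?_⟩
      rw [h, ← hBadd, hρ]
      congr 1
      ring

/-- Squared distance on the product. -/
def l2sq {Y H : Type} [MetricSpace Y] [NormedAddCommGroup H] (p q : Y × H) : ℝ :=
  dist p.1 q.1 ^ 2 + ‖p.2 - q.2‖ ^ 2

theorem mid_aux {Y H : Type} [MetricSpace Y] [NormedAddCommGroup H] [InnerProductSpace ℝ H]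
    (p q s : Y × H) (L : ℝ) (h1 : l2sq p q = L) (h2 : l2sq q s = L) (h3 : l2sq p s = 4 * L) :
    q.2 - p.2 = s.2 - q.2 := by
  unfold l2sq at *
  have ht := dist_triangle p.1 q.1 s.1
  have hn := parallelogram_law_with_norm ℝ (p.2 - q.2) (q.2 - s.2)
  have e : p.2 - q.2 + (q.2 - s.2) = p.2 - s.2 := by abel
  rw [e] at hn
  have ha : dist p.1 s.1 ^ 2 ≤ 2 * dist p.1 q.1 ^ 2 + 2 * dist q.1 s.1 ^ 2 := by
    have := dist_nonneg (x := p.1) (y := s.1)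
    nlinarith [sq_nonneg (dist p.1 q.1 - dist q.1 s.1)]
  have hz : ‖p.2 - q.2 - (q.2 - s.2)‖ ^ 2 ≤ 0 := by nlinarith
  have hz' : p.2 - q.2 - (q.2 - s.2) = 0 := by
    rw [← norm_eq_zero]
    exact pow_eq_zero_iff (two_ne_zero) |>.1 (le_antisymm hz (sq_nonneg _))
  have := sub_eq_zero.1 hz'
  rw [← neg_sub p.2 q.2, this, neg_sub]

theorem core {Y H : Type} [MetricSpace Y] [NormedAddCommGroup H] [InnerProductSpace ℝ H]
    (hY : ∀ ℓ : Set Y, ¬ IsSplittingLine ℓ)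
    (S : H → Y × H → Y × H) (r : Y × H → H)
    (hS0 : ∀ p, S 0 p = p) (hSadd : ∀ u v p, S (u + v) p = S u (S v p))
    (hr : ∀ u p, r (S u p) = r p + u)
    (hd : ∀ u v p q, l2sq (S u p) (S v q)
      = l2sq p q + 2 * inner ℝ (u - v) (r p - r q) + ‖u - v‖ ^ 2) :
    ∃ W : H → H, ∀ v p, S v p = (p.1, p.2 + W v) := by
  rcases isEmpty_or_nonempty Y with hE | ⟨⟨y₀⟩⟩
  · exact ⟨id, fun v p => (hE.false p.1).elim⟩
  have hself : ∀ p : Y × H, l2sq p p = 0 := fun p => by simp [l2sq]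
  have hdbl : ∀ v p, (S (v + v) p).2 - p.2 = (2 : ℝ) • ((S v p).2 - p.2) := by
    intro v p
    have h := mid_aux p (S v p) (S (v + v) p) (‖v‖ ^ 2)
      (by have := hd 0 v p p; rw [hS0] at this; rw [this, hself]; simp)
      (by rw [hd, hself]; simp)
      (by
        have := hd 0 (v + v) p p
        rw [hS0] at this
        rw [this, hself, ← two_smul ℝ v]
        simp [norm_smul]; ring)
    rw [two_smul]
    nth_rewrite 2 [h]
    abel
  have hbd : ∀ v p q, ‖((S v p).2 - p.2) - ((S v q).2 - q.2)‖ ≤ 2 * √(l2sq p q) := by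
    intro v p q
    have h := hd v v p q
    simp only [sub_self, inner_zero_left, norm_zero] at h
    have h1 : ‖(S v p).2 - (S v q).2‖ ≤ √(l2sq p q) := by
      apply Real.le_sqrt_of_sq_le
      have : l2sq (S v p) (S v q) = l2sq p q := by rw [h]; ring
      rw [← this]; unfold l2sq
      nlinarith [sq_nonneg (dist (S v p).1 (S v q).1)]
    have h2 : ‖p.2 - q.2‖ ≤ √(l2sq p q) := by
      apply Real.le_sqrt_of_sq_le
      unfold l2sq
      nlinarith [sq_nonneg (dist p.1 q.1)]
    calc _ = ‖((S v p).2 - (S v q).2) - (p.2 - q.2)‖ := by congr 1; abel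
      _ ≤ _ := norm_sub_le _ _
      _ ≤ _ := by linarith
  have hpow : ∀ (n : ℕ) v p q, (2 : ℝ) ^ n * ‖((S v p).2 - p.2) - ((S v q).2 - q.2)‖
      ≤ 2 * √(l2sq p q) := by
    intro n
    induction n with
    | zero => intro v p q; simpa using hbd v p q
    | succ n ih =>
      intro v p q
      have := ih (v + v) p q
      rw [hdbl, hdbl, ← smul_sub, norm_smul] at this
      simp only [Real.norm_ofNat] at this
      rw [pow_succ]; linarith
  have hconst : ∀ v p q, (S v p).2 - p.2 = (S v q).2 - q.2 := by
    intro v p q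
    by_contra hne
    have hpos : 0 < ‖((S v p).2 - p.2) - ((S v q).2 - q.2)‖ :=
      norm_pos_iff.2 (sub_ne_zero.2 hne)
    obtain ⟨n, hn⟩ := pow_unbounded_of_one_lt
      (2 * √(l2sq p q) / ‖((S v p).2 - p.2) - ((S v q).2 - q.2)‖) (one_lt_two (α := ℝ))
    rw [div_lt_iff₀ hpos] at hn
    exact absurd (hpow n v p q) (not_le.2 hn)
  let W₀ : H → H := fun v => (S v (y₀, 0)).2
  have hW : ∀ v p, (S v p).2 = p.2 + W₀ v := by
    intro v p
    have := hconst v p (y₀, 0)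
    simp only [sub_zero] at this
    rw [← sub_eq_iff_eq_add']
    exact this
  have hWadd : ∀ u v, W₀ (u + v) = W₀ u + W₀ v := by
    intro u v
    show (S (u + v) (y₀, 0)).2 = _
    rw [hSadd, hW, add_comm]
  have hWn : ∀ v, ‖W₀ v‖ ≤ ‖v‖ := by
    intro v
    have h := hd v 0 (y₀, 0) (y₀, 0)
    rw [hself, hS0] at h
    simp only [sub_self, inner_zero_right, sub_zero] at h
    have h2 : ‖W₀ v‖ ^ 2 ≤ ‖v‖ ^ 2 := by
      unfold l2sq at h
      simp only [sub_zero] at h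
      show ‖(S v (y₀, 0)).2‖ ^ 2 ≤ _
      nlinarith [sq_nonneg (dist (S v (y₀, 0)).1 y₀)]
    exact (sq_le_sq₀ (norm_nonneg _) (norm_nonneg _)).1 h2
  let Wa : H →+ H := AddMonoidHom.mk' W₀ hWadd
  have hWc : Continuous Wa :=
    AddMonoidHomClass.continuous_of_bound Wa 1 (fun v => by rw [one_mul]; exact hWn v)
  have hWs : ∀ (t : ℝ) v, W₀ (t • v) = t • W₀ v := fun t v => map_real_smul Wa hWc t v
  -- first component does not depend on the Hilbert coordinate
  let A : H → Y → Y := fun v y => (S v (y, 0)).1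
  have hA : ∀ v p, S v p = (A v p.1, p.2 + W₀ v) := by
    intro v p
    refine Prod.ext ?_ (hW v p)
    have h := hd v v p (p.1, 0)
    simp only [sub_self, inner_zero_left, norm_zero] at h
    unfold l2sq at h
    rw [hW, hW] at h
    simp only [dist_self, zero_add, sub_zero, add_sub_cancel_right] at h
    have : dist (S v p).1 (S v (p.1, 0)).1 ^ 2 = 0 := by nlinarith
    exact dist_eq_zero.1 (pow_eq_zero_iff two_ne_zero |>.1 this)
  have hself2 : ∀ v y, dist (A v y) y ^ 2 = ‖v‖ ^ 2 - ‖W₀ v‖ ^ 2 := by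
    intro v y
    have h := hd v 0 (y, 0) (y, 0)
    rw [hself, hS0, hA] at h
    simp [l2sq] at h
    linarith
  refine ⟨W₀, fun v p => ?_⟩
  rw [hA]
  refine Prod.ext ?_ rfl
  show A v p.1 = p.1
  by_contra hne
  have hc2 : 0 < ‖v‖ ^ 2 - ‖W₀ v‖ ^ 2 := by
    rw [← hself2 v p.1]
    exact pow_pos (dist_pos.2 hne) 2
  obtain ⟨c, hc, hcc⟩ : ∃ c : ℝ, 0 < c ∧ c ^ 2 = ‖v‖ ^ 2 - ‖W₀ v‖ ^ 2 :=
    ⟨_, Real.sqrt_pos.2 hc2, Real.sq_sqrt hc2.le⟩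
  have hrh : ∀ y h, inner ℝ v (r (y, h)) = inner ℝ v (r (y, 0)) + inner ℝ (W₀ v) h := by
    intro y h
    have h1 := hd v 0 (y, 0) (y, h)
    rw [hS0, hA] at h1
    unfold l2sq at h1
    simp only [zero_add, sub_zero, dist_self, zero_sub, norm_neg, inner_sub_right] at h1
    rw [hself2, norm_sub_sq_real] at h1
    linarith
  have hrA : ∀ (t : ℝ) y, inner ℝ v (r (A (t • v) y, 0))
      = inner ℝ v (r (y, 0)) + t * c ^ 2 := by
    intro t y
    have h1 := hr (t • v) (y, 0)
    rw [hA] at h1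
    have h2 := hrh (A (t • v) y) (0 + W₀ (t • v))
    simp only at h1
    rw [h1, inner_add_right, hWs, zero_add, inner_smul_right, inner_smul_right,
      real_inner_self_eq_norm_sq, real_inner_self_eq_norm_sq] at h2
    rw [hcc]; linarith
  have hdA : ∀ (s t : ℝ) y y', dist (A (s • v) y) (A (t • v) y') ^ 2 = dist y y' ^ 2
      + 2 * (s - t) * (inner ℝ v (r (y, 0)) - inner ℝ v (r (y', 0))) + (s - t) ^ 2 * c ^ 2 := by
    intro s t y y'
    have h1 := hd (s • v) (t • v) (y, 0) (y', 0)
    rw [hA, hA] at h1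
    unfold l2sq at h1
    simp only [zero_add, sub_self, norm_zero, hWs, ← sub_smul, norm_smul, inner_smul_left,
      inner_sub_right, mul_pow, Real.norm_eq_abs, sq_abs] at h1
    simp at h1
    rw [hcc]; linarith
  obtain ⟨ℓ, hℓ⟩ := split_of_flow (fun u y => A ((u / c) • v) y)
    (fun y => inner ℝ v (r (y, 0)) / c) y₀
    (fun y => by simp [A, hS0])
    (fun s t y => by
      show (S _ _).1 = A _ _
      rw [add_div, add_smul, hSadd, hA, hA])
    (fun t y => by
      show inner ℝ v (r (A _ y, 0)) / c = _
      rw [hrA]; field_simp)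
    (fun s t y y' => by
      rw [hdA]; field_simp)
  exact hY ℓ hℓ

theorem fiber_translate {Y H : Type} [MetricSpace Y] [NormedAddCommGroup H]
    [InnerProductSpace ℝ H] (hY : ∀ ℓ : Set Y, ¬ IsSplittingLine ℓ) (G : Y × H ≃ Y × H)
    (hG : ∀ p q, l2sq (G p) (G q) = l2sq p q) :
    ∃ W : H → H, ∀ v p, G (p.1, p.2 + v) = ((G p).1, (G p).2 + W v) := by
  obtain ⟨W, hW⟩ := core hY (fun v p => G ((G.symm p).1, (G.symm p).2 + v))
    (fun p => (G.symm p).2) (by simp) (by intro u v p; simp [add_assoc, add_comm v u])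
    (by intro u p; simp)
    (by
      intro u v p q
      have h0 : l2sq p q = l2sq (G.symm p) (G.symm q) := by simpa using (hG (G.symm p) (G.symm q))
      rw [hG, h0]
      unfold l2sq
      simp only
      rw [add_sub_add_comm, norm_add_sq_real, real_inner_comm]
      ring)
  exact ⟨W, fun v p => by simpa using hW v (G p)⟩

theorem l2_split {Y H : Type} [MetricSpace Y] [NormedAddCommGroup H]
    [InnerProductSpace ℝ H] (hY : ∀ ℓ : Set Y, ¬ IsSplittingLine ℓ) (G : Y × H ≃ Y × H)
    (hG : ∀ p q, l2sq (G p) (G q) = l2sq p q) :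
    ∃ (g : Y → Y) (h : H → H), Isometry g ∧ Isometry h ∧ ∀ p, G p = (g p.1, h p.2) := by
  rcases isEmpty_or_nonempty Y with hE | ⟨⟨y₀⟩⟩
  · exact ⟨id, id, isometry_id, isometry_id, fun p => (hE.false p.1).elim⟩
  obtain ⟨W, hW⟩ := fiber_translate hY G hG
  obtain ⟨U, hU⟩ := fiber_translate hY G.symm (fun p q => by rw [← hG]; simp)
  have hsurj : ∀ m, W (U m) = m := by
    intro m
    have h1 := hU m (G (y₀, 0))
    have h2 := hW (U m) (y₀, 0)
    rw [Equiv.symm_apply_apply] at h1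
    rw [← h1, Equiv.apply_symm_apply] at h2
    exact (add_left_cancel (congrArg Prod.snd h2)).symm
  have hf : ∀ y h, G (y, h) = ((G (y, 0)).1, (G (y, 0)).2 + W h) := by
    intro y h
    simpa using hW h (y, 0)
  have hk : ∀ y, (G (y, 0)).2 = (G (y₀, 0)).2 := by
    intro y
    set m := (G (y, 0)).2 - (G (y₀, 0)).2 with hm
    have h1 := hG (y, U m) (y₀, 0)
    have h2 := hG (y, 0) (y₀, U m)
    rw [hf y (U m), hsurj] at h1
    rw [hf y₀ (U m), hsurj] at h2
    unfold l2sq at h1 h2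
    simp only at h1 h2
    have e1 : (G (y, 0)).2 + m - (G (y₀, 0)).2 = (2 : ℝ) • m := by rw [two_smul, hm]; abel
    have e2 : (G (y, 0)).2 - ((G (y₀, 0)).2 + m) = 0 := by rw [hm]; abel
    rw [e1, norm_smul] at h1
    rw [e2] at h2
    simp at h1 h2
    have : ‖m‖ ^ 2 = 0 := by nlinarith
    exact sub_eq_zero.1 (norm_eq_zero.1 (pow_eq_zero_iff two_ne_zero |>.1 this))
  have key : ∀ p : Y × H, G p = ((G (p.1, 0)).1, (G (y₀, 0)).2 + W p.2) := by
    rintro ⟨y, h⟩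
    rw [hf, hk]
  refine ⟨fun y => (G (y, 0)).1, fun h => (G (y₀, 0)).2 + W h, ?_, ?_, key⟩
  · refine Isometry.of_dist_eq fun y y' => ?_
    have := hG (y, 0) (y', 0)
    unfold l2sq at this
    rw [hk, hk y'] at this
    simp only [sub_self, norm_zero] at this
    exact (sq_eq_sq₀ dist_nonneg dist_nonneg).1 (by linarith)
  · refine Isometry.of_dist_eq fun h h' => ?_
    have := hG (y₀, h) (y₀, h')
    rw [key, key (y₀, h')] at this
    unfold l2sq at this
    simp only [dist_self] at this
    rw [dist_eq_norm, dist_eq_norm]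
    exact (sq_eq_sq₀ (norm_nonneg _) (norm_nonneg _)).1 (by linarith)

/-- if `X = Y × H` with `H` a Hilbert space and `Y` without splitting
lines, every isometry of `X` preserves the product structure, so
`Iso(X) ≅ Iso(Y) × Iso(H)`. -/
theorem isometry_group_splits {X Y H : Type} [MetricSpace X] [CompleteSpace X]
    [MetricSpace Y] [NormedAddCommGroup H] [InnerProductSpace ℝ H] [CompleteSpace H]
    (Φ : X → Y × H) (hΦ : IsL2Prod Φ) (hY : ∀ ℓ : Set Y, ¬ IsSplittingLine ℓ)
    (F : X ≃ᵢ X) :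
    ∃ (g : Y ≃ᵢ Y) (h : H ≃ᵢ H),
      ∀ p : X, Φ (F p) = (g (Φ p).1, h (Φ p).2) := by
  classical
  rcases isEmpty_or_nonempty Y with hE | ⟨⟨y₀⟩⟩
  · exact ⟨IsometryEquiv.refl Y, IsometryEquiv.refl H, fun p => (hE.false (Φ p).1).elim⟩
  obtain ⟨hbij, hdist⟩ := hΦ
  let e : X ≃ Y × H := Equiv.ofBijective Φ hbij
  have he : ∀ p, e p = Φ p := fun p => rfl
  have hl : ∀ p q, l2sq (e p) (e q) = dist p q ^ 2 := by
    intro p q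
    rw [hdist, l2sq, ← dist_eq_norm]
    rfl
  let G : Y × H ≃ Y × H := (e.symm.trans F.toEquiv).trans e
  have hGe : ∀ p, G (e p) = e (F p) := fun p => by simp [G]
  have hG : ∀ p q, l2sq (G p) (G q) = l2sq p q := by
    intro p q
    obtain ⟨p, rfl⟩ := e.surjective p
    obtain ⟨q, rfl⟩ := e.surjective q
    rw [hGe, hGe, hl, hl, F.dist_eq]
  obtain ⟨g, h, hg, hh, hgh⟩ := l2_split hY G hG
  have gs : Function.Surjective g := fun y => by
    obtain ⟨p, hp⟩ := G.surjective (y, 0)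
    exact ⟨p.1, by rw [hgh] at hp; exact congrArg Prod.fst hp⟩
  have hs : Function.Surjective h := fun z => by
    obtain ⟨p, hp⟩ := G.surjective (y₀, z)
    exact ⟨p.2, by rw [hgh] at hp; exact congrArg Prod.snd hp⟩
  refine ⟨⟨Equiv.ofBijective g ⟨hg.injective, gs⟩, hg⟩,
    ⟨Equiv.ofBijective h ⟨hh.injective, hs⟩, hh⟩, fun p => ?_⟩
  have := hGe p
  rw [hgh] at this
  exact this.symm
end
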